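/- arXiv:1807.06948 — 2 statements merged into one kernel-verified Lean document; each statement's English description precedes it below -/
import Mathlib

section
/- Let s > 1/2, 0 < t₁ < t₂, M ∈ ℝ, ε ∈ {+1,−1}, and let A : (t₁,t₂) → ℓ^{2,s}(ℤ) be continuously differentiable as a map into the Banach space ℓ^{2,s}(ℤ), such that each component satisfies i A_k'(t) = ε (1/(8πt)) ∑_{(j₁,j₂,j₃)∈ℤ³, k−j₁+j₂−j₃=0} e^{−i(k²−j₁²+j₂²−j₃²)/(4t)} A_{j₁}(t) \overline{A_{j₂}(t)} A_{j₃}(t) − (M/(4πt)) A_k(t). Then the mass ∑_{k∈ℤ} |A_k(t)|² is constant on (t₁,t₂). -/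
open scoped BigOperators
open Set

/-- Membership in the weighted space `ℓ^{2,s}(ℤ)`. -/
def wMem (s : ℝ) (a : ℤ → ℂ) : Prop :=
  Summable (fun k : ℤ => (1 + |(k : ℝ)|) ^ (2 * s) * ‖a k‖ ^ 2)

/-- The cubic interaction sum `∑_{k-j₁+j₂-j₃=0} e^{-i(k²-j₁²+j₂²-j₃²)/(4t)} A_{j₁} conj(A_{j₂}) A_{j₃}`,
parametrized by the two free indices `(j₁, j₂)`, with `j₃ = k - j₁ + j₂`. -/
noncomputable def cubicSum (A : ℤ → ℂ) (t : ℝ) (k : ℤ) : ℂ :=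
  ∑' j : ℤ × ℤ,
    Complex.exp (-Complex.I *
        ((k ^ 2 - j.1 ^ 2 + j.2 ^ 2 - (k - j.1 + j.2) ^ 2 : ℤ) : ℂ) / (4 * (t : ℂ)))
      * A j.1 * (starRingEnd ℂ) (A j.2) * A (k - j.1 + j.2)

/-- `A : (t₁,t₂) → ℓ^{2,s}` is continuously differentiable as a map into the Banach
space `ℓ^{2,s}(ℤ)`: the weighted sequence `k ↦ (1+|k|)^s A_k(t)` defines a `C¹` curve in `ℓ²`. -/
def C1IntoL2s (s t₁ t₂ : ℝ) (A : ℝ → ℤ → ℂ) : Prop :=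
  ∃ B : ℝ → lp (fun _ : ℤ => ℂ) 2,
    (∀ t ∈ Ioo t₁ t₂, ∀ k : ℤ, B t k = ((1 + |(k : ℝ)|) ^ s : ℝ) * A t k) ∧
    ContDiffOn ℝ 1 B (Ioo t₁ t₂)

/-- `ℓ^{2,s} ⊂ ℓ¹` for `s > 1/2`. -/
theorem mc_summable_norm (s : ℝ) (hs : 1 / 2 < s) (a : ℤ → ℂ) (h : wMem s a) :
    Summable (fun k => ‖a k‖) := by
  have h1 : Summable (fun n : ℤ => 1 / |(n : ℝ) + (1 / 2 : ℝ)| ^ (2 * s)) :=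
    (Real.summable_one_div_int_add_rpow _ _).2 (by linarith)
  refine Summable.of_nonneg_of_le (fun k => norm_nonneg _) (fun k => ?_) (h1.add h)
  have hle : |(k : ℝ) + 1 / 2| ≤ 1 + |(k : ℝ)| := by
    refine (abs_add_le _ _).trans ?_
    rw [abs_of_pos (by norm_num : (0 : ℝ) < 1 / 2)]
    linarith
  have hpos : 0 < |(k : ℝ) + 1 / 2| := by
    rw [abs_pos]
    intro h0
    have h2 : ((2 * k + 1 : ℤ) : ℝ) = 0 := by push_cast; linarith
    have h3 : (2 * k + 1 : ℤ) = 0 := by exact_mod_cast h2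
    omega
  have hw : |(k : ℝ) + 1 / 2| ^ (2 * s) ≤ (1 + |(k : ℝ)|) ^ (2 * s) :=
    Real.rpow_le_rpow hpos.le hle (by linarith)
  have hu : 0 < |(k : ℝ) + 1 / 2| ^ (2 * s) := Real.rpow_pos_of_pos hpos _
  set u := |(k : ℝ) + 1 / 2| ^ (2 * s)
  set w := (1 + |(k : ℝ)|) ^ (2 * s)
  set x := ‖a k‖
  have hx : 0 ≤ x := norm_nonneg _
  have h4 : u * x ^ 2 ≤ w * x ^ 2 := by gcongr
  have h5 : x ≤ 1 / u + u * x ^ 2 := by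
    rw [div_add' _ _ _ hu.ne', le_div_iff₀ hu]
    nlinarith [sq_nonneg (u * x - 1), mul_nonneg hu.le hx]
  linarith

/-- The quartic summand. -/
noncomputable def mcT (A : ℤ → ℂ) (t : ℝ) (x : ℤ × (ℤ × ℤ)) : ℂ :=
  (starRingEnd ℂ) (A x.1) * (Complex.exp (-Complex.I *
        ((x.1 ^ 2 - x.2.1 ^ 2 + x.2.2 ^ 2 - (x.1 - x.2.1 + x.2.2) ^ 2 : ℤ) : ℂ) / (4 * (t : ℂ)))
      * A x.2.1 * (starRingEnd ℂ) (A x.2.2) * A (x.1 - x.2.1 + x.2.2))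

theorem mc_norm_exp (n : ℤ) (t : ℝ) :
    ‖Complex.exp (-Complex.I * (n : ℂ) / (4 * (t : ℂ)))‖ = 1 := by
  have : -Complex.I * (n : ℂ) / (4 * (t : ℂ)) = ((-(n : ℝ) / (4 * t) : ℝ) : ℂ) * Complex.I := by
    push_cast; ring
  rw [this, Complex.norm_exp_ofReal_mul_I]

theorem mc_summable_T (A : ℤ → ℂ) (t : ℝ) (h : Summable (fun k => ‖A k‖)) :
    Summable (mcT A t) := by
  have h2 : Summable (fun x : ℤ × ℤ => ‖A x.1‖ * ‖A x.2‖) :=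
    h.mul_of_nonneg h (fun _ => norm_nonneg _) (fun _ => norm_nonneg _)
  have h3 : Summable (fun x : ℤ × (ℤ × ℤ) => ‖A x.1‖ * (‖A x.2.1‖ * ‖A x.2.2‖)) :=
    h.mul_of_nonneg h2 (fun _ => norm_nonneg _) (fun _ => by positivity)
  refine Summable.of_norm_bounded (h3.mul_right (∑' k, ‖A k‖)) (fun x => ?_)
  have hb : ‖A (x.1 - x.2.1 + x.2.2)‖ ≤ ∑' k, ‖A k‖ :=
    h.le_tsum _ (fun _ _ => norm_nonneg _)
  unfold mcT
  simp only [norm_mul, mc_norm_exp, RCLike.norm_conj, one_mul]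
  calc _ = ‖A x.1‖ * (‖A x.2.1‖ * ‖A x.2.2‖) * ‖A (x.1 - x.2.1 + x.2.2)‖ := by ring
    _ ≤ _ := by gcongr

/-- The involution exchanging `(k, j₂)` with `(j₁, j₃)`. -/
def mcσ : ℤ × (ℤ × ℤ) ≃ ℤ × (ℤ × ℤ) where
  toFun x := (x.2.1, (x.1, x.1 - x.2.1 + x.2.2))
  invFun x := (x.2.1, (x.1, x.1 - x.2.1 + x.2.2))
  left_inv x := by ext <;> simp <;> ring
  right_inv x := by ext <;> simp <;> ring

theorem mc_T_symm (A : ℤ → ℂ) (t : ℝ) (x : ℤ × (ℤ × ℤ)) :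
    mcT A t (mcσ x) = (starRingEnd ℂ) (mcT A t x) := by
  obtain ⟨k, j, l⟩ := x
  have e : j - k + (k - j + l) = l := by ring
  simp only [mcT, mcσ, Equiv.coe_fn_mk, map_mul, ← Complex.exp_conj, map_div₀, map_neg,
    Complex.conj_I, Complex.conj_ofReal, Complex.conj_conj, map_intCast, map_ofNat, e]
  have : -Complex.I * ((j ^ 2 - k ^ 2 + (k - j + l) ^ 2 - l ^ 2 : ℤ) : ℂ) / (4 * (t : ℂ))
      = - -Complex.I * ((k ^ 2 - j ^ 2 + l ^ 2 - (k - j + l) ^ 2 : ℤ) : ℂ) / (4 * (t : ℂ)) := by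
    push_cast; ring
  rw [this]
  ring

theorem mc_quartic (A : ℤ → ℂ) (t : ℝ) (h : Summable (fun k => ‖A k‖)) :
    ∃ S : ℝ, HasSum (fun k => (starRingEnd ℂ) (A k) * cubicSum A t k) (S : ℂ) := by
  have hs := mc_summable_T A t h
  have hr : (starRingEnd ℂ) (∑' x, mcT A t x) = ∑' x, mcT A t x := by
    rw [Complex.conj_tsum, ← mcσ.tsum_eq (mcT A t)]
    simp only [mc_T_symm]
  obtain ⟨S, hS⟩ := Complex.conj_eq_iff_real.1 hr
  refine ⟨S, ?_⟩
  rw [← hS]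
  have h1 := hs.prod
  have h2 : (fun k => (starRingEnd ℂ) (A k) * cubicSum A t k)
      = fun k => ∑' j, mcT A t (k, j) := by
    funext k
    simp only [mcT, cubicSum, tsum_mul_left]
  rw [h2, hs.tsum_prod]
  exact h1.hasSum

/-- Conservation of mass: for a `C¹`-in-`ℓ^{2,s}` solution of the coefficient system,
the mass `∑_k |A_k(t)|²` is constant on `(t₁,t₂)`. -/
theorem mass_conservation (s t₁ t₂ M ε : ℝ) (hs : 1 / 2 < s)
    (ht₁ : 0 < t₁) (ht : t₁ < t₂) (hε : ε = 1 ∨ ε = -1)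
    (A : ℝ → ℤ → ℂ)
    (hmem : ∀ t ∈ Ioo t₁ t₂, wMem s (A t))
    (hC1 : C1IntoL2s s t₁ t₂ A)
    (hode : ∀ t ∈ Ioo t₁ t₂, ∀ k : ℤ,
      Complex.I * deriv (fun τ : ℝ => A τ k) t =
        (ε : ℂ) * (1 / (8 * (Real.pi : ℂ) * t)) * cubicSum (A t) t k
          - ((M : ℂ) / (4 * (Real.pi : ℂ) * t)) * A t k) :
    ∀ t ∈ Ioo t₁ t₂, ∀ t' ∈ Ioo t₁ t₂,
      ∑' k : ℤ, ‖A t k‖ ^ 2 = ∑' k : ℤ, ‖A t' k‖ ^ 2 := by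
  obtain ⟨B, hB, hBd⟩ := hC1
  have hw1 : ∀ k : ℤ, 1 ≤ (1 + |(k : ℝ)|) ^ s := fun k =>
    Real.one_le_rpow (by linarith [abs_nonneg (k : ℝ)]) (by linarith)
  let T : ∀ _ : ℤ, ℂ →L[ℝ] ℂ := fun k =>
    ((1 + |(k : ℝ)|) ^ s)⁻¹ • ContinuousLinearMap.id ℝ ℂ
  have hT : ∀ k, ‖T k‖ ≤ 1 := by
    intro k
    refine ContinuousLinearMap.opNorm_le_bound _ zero_le_one (fun x => ?_)
    have : ‖T k x‖ = ((1 + |(k : ℝ)|) ^ s)⁻¹ * ‖x‖ := by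
      simp only [T, ContinuousLinearMap.smul_apply, ContinuousLinearMap.id_apply, norm_smul]
      rw [Real.norm_of_nonneg (inv_nonneg.2 (by linarith [hw1 k]))]
    rw [this]
    exact mul_le_mul_of_nonneg_right (inv_le_one_of_one_le₀ (hw1 k)) (norm_nonneg _)
  let D : lp (fun _ : ℤ => ℂ) 2 →L[ℝ] lp (fun _ : ℤ => ℂ) 2 :=
    lp.mapCLM 2 T zero_le_one hT
  have hDapp : ∀ f k, D f k = T k (f k) := fun f k => rfl
  have hDB : ∀ t ∈ Ioo t₁ t₂, ∀ k, D (B t) k = A t k := by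
    intro t ht k
    rw [hDapp, hB t ht k]
    have : (((1 + |(k : ℝ)|) ^ s : ℝ) : ℂ) ≠ 0 := by
      exact_mod_cast (by linarith [hw1 k] : (1 + |(k : ℝ)|) ^ s ≠ 0 )
    simp only [T, ContinuousLinearMap.smul_apply, ContinuousLinearMap.id_apply,
      Complex.real_smul, Complex.ofReal_inv]
    field_simp
  have hmass : ∀ t ∈ Ioo t₁ t₂,
      inner ℂ (D (B t)) (D (B t)) = ((∑' k : ℤ, ‖A t k‖ ^ 2 : ℝ) : ℂ) := by
    intro t ht
    rw [lp.inner_eq_tsum, Complex.ofReal_tsum]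
    refine tsum_congr fun k => ?_
    rw [hDB t ht k, inner_self_eq_norm_sq_to_K]
    push_cast
    rfl
  have hder : ∀ t ∈ Ioo t₁ t₂,
      HasDerivAt (fun t => inner ℂ (D (B t)) (D (B t))) 0 t := by
    intro t ht
    have hnhds : Ioo t₁ t₂ ∈ nhds t := isOpen_Ioo.mem_nhds ht
    have hB1 : HasDerivAt B (deriv B t) t :=
      ((hBd.differentiableOn one_ne_zero).differentiableAt hnhds).hasDerivAt
    have hC : HasDerivAt (fun t => D (B t)) (D (deriv B t)) t :=
      D.hasFDerivAt.comp_hasDerivAt t hB1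
    have hin := hC.inner ℂ hC
    set C' := D (deriv B t)
    have hC'k : ∀ k, C' k = deriv (fun τ : ℝ => A τ k) t := by
      intro k
      have h1 : HasDerivAt (fun τ => lp.evalCLM ℝ (fun _ : ℤ => ℂ) 2 k (D (B τ)))
          (lp.evalCLM ℝ (fun _ : ℤ => ℂ) 2 k C') t :=
        (lp.evalCLM ℝ (fun _ : ℤ => ℂ) 2 k).hasFDerivAt.comp_hasDerivAt t hC
      have h2 : HasDerivAt (fun τ => A τ k) (C' k) t := by
        refine HasDerivAt.congr_of_eventuallyEq h1 ?_
        filter_upwards [hnhds] with τ hτ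
        exact (hDB τ hτ k).symm
      exact h2.deriv.symm
    obtain ⟨S, hS⟩ := mc_quartic (A t) t (mc_summable_norm s hs _ (hmem t ht))
    have hm : HasSum (fun k => (starRingEnd ℂ) (A t k) * A t k)
        ((∑' k : ℤ, ‖A t k‖ ^ 2 : ℝ) : ℂ) := by
      have := lp.hasSum_inner (𝕜 := ℂ) (D (B t)) (D (B t))
      rw [hmass t ht] at this
      refine this.congr_fun ?_
      intro k
      rw [hDB t ht k, RCLike.inner_apply, mul_comm]
    have hsum := (hS.mul_left (-Complex.I * ((ε : ℂ) * (1 / (8 * (Real.pi : ℂ) * t))))).sub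
      (hm.mul_left (-Complex.I * ((M : ℂ) / (4 * (Real.pi : ℂ) * t))))
    have hinner := lp.hasSum_inner (𝕜 := ℂ) (D (B t)) C'
    have hval := hinner.unique (hsum.congr_fun (fun k => by
      rw [hDB t ht k, RCLike.inner_apply, hC'k]
      have h0 : deriv (fun τ : ℝ => A τ k) t
          = -Complex.I * (Complex.I * deriv (fun τ : ℝ => A τ k) t) := by
        rw [← mul_assoc, neg_mul, Complex.I_mul_I]; ring
      rw [h0, hode t ht k]
      ring))
    have hz : inner ℂ (D (B t)) C' + inner ℂ C' (D (B t)) = 0 := by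
      rw [← inner_conj_symm C' (D (B t)), hval]
      simp only [map_sub, map_mul, map_div₀, map_neg, map_one, Complex.conj_I,
        Complex.conj_ofReal, map_ofNat]
      ring
    rw [hz] at hin
    exact hin
  intro t htt t' htt'
  have := isOpen_Ioo.is_const_of_deriv_eq_zero isPreconnected_Ioo
    (fun x hx => (hder x hx).differentiableAt.differentiableWithinAt)
    (fun x hx => (hder x hx).deriv) htt htt'
  simp only [hmass t htt, hmass t' htt'] at this
  exact_mod_cast this
end

section
/- There exists an absolute constant C such that for all sequences M, N ∈ ℓ^{2,1}(ℤ) and P, R ∈ ℓ²(ℤ): ∑_{k∈ℤ} (|M| ⋆ |N| ⋆ |P|)(k) |R_k| ≤ C ‖M‖_{ℓ²}^{1/2} ‖M‖_{ℓ^{2,1}}^{1/2} ‖N‖_{ℓ²}^{1/2} ‖N‖_{ℓ^{2,1}}^{1/2} ‖P‖_{ℓ²} ‖R‖_{ℓ²}, where (|M| ⋆ |N| ⋆ |P|)(k) := ∑_{(j₁,j₂,j₃)∈ℤ³, j₁+j₂+j₃=k} |M_{j₁}| |N_{j₂}| |P_{j₃}|. -/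
open scoped BigOperators ENNReal NNReal

/-- The `ℓ^{2,s}(ℤ)` norm (`s = 0` gives the `ℓ²(ℤ)` norm). -/
noncomputable def wnorm (s : ℝ) (a : ℤ → ℂ) : ℝ :=
  (∑' k : ℤ, (1 + |(k : ℝ)|) ^ (2 * s) * ‖a k‖ ^ 2) ^ (1 / 2 : ℝ)

theorem aux_kernel_sum (l : ℝ) (hl : 0 < l) (s : Finset ℤ) :
    ∑ k ∈ s, l / (l ^ 2 + (1 + |(k : ℝ)|) ^ 2) ≤ 4 := by
  set f : ℤ → ℝ := fun k => l / (l ^ 2 + (1 + |(k : ℝ)|) ^ 2) with hf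
  have f0 : ∀ k, 0 ≤ f k := fun k => by positivity
  have hb : ∀ n : ℕ, f n ≤ 2 * l / (l + n) - 2 * l / (l + (n + 1)) := by
    intro n
    have hn : (0 : ℝ) ≤ n := Nat.cast_nonneg n
    have : 2 * l / (l + n) - 2 * l / (l + (n + 1)) = 2 * l / ((l + n) * (l + (n + 1))) := by
      field_simp
      ring
    rw [this]
    simp only [hf, Int.cast_natCast, abs_of_nonneg hn]
    rw [div_le_div_iff₀ (by positivity) (by positivity)]
    have : (l + n) * (l + (n + 1)) ≤ 2 * (l ^ 2 + (1 + (n : ℝ)) ^ 2) := by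
      nlinarith [sq_nonneg (l - (n + 1))]
    nlinarith
  have hsum : ∀ n : ℕ, ∑ i ∈ Finset.range n, f (i : ℤ) ≤ 2 := by
    intro n
    have h1 : ∑ i ∈ Finset.range n, f (i : ℤ) ≤ 2 - 2 * l / (l + n) := by
      induction n with
      | zero =>
        have : 2 * l / l = 2 := by field_simp
        simp [this]
      | succ n ih =>
        rw [Finset.sum_range_succ]
        have := hb n
        push_cast
        linarith
    have : 0 ≤ 2 * l / (l + n) := by positivity
    linarith
  have S1 : Summable (fun n : ℕ => f (n : ℤ)) :=
    summable_of_sum_range_le (fun n => f0 _) hsum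
  have T1 : ∑' n : ℕ, f (n : ℤ) ≤ 2 := Real.tsum_le_of_sum_range_le (fun n => f0 _) hsum
  have hle : ∀ n : ℕ, f (-((n : ℤ) + 1)) ≤ f (n : ℤ) := by
    intro n
    have hn : (0 : ℝ) ≤ n := Nat.cast_nonneg n
    simp only [hf]
    push_cast
    rw [abs_neg, abs_of_nonneg hn, abs_of_nonneg (by positivity)]
    gcongr
    linarith
  have S2 : Summable (fun n : ℕ => f (-((n : ℤ) + 1))) :=
    Summable.of_nonneg_of_le (fun n => f0 _) hle S1
  have T2 := S2.tsum_le_tsum hle S1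
  have H := HasSum.of_nat_of_neg_add_one S1.hasSum S2.hasSum
  have := sum_le_hasSum s (fun k _ => f0 k) H
  linarith

theorem aux_wnorm_nonneg (s : ℝ) (a : ℤ → ℂ) : 0 ≤ wnorm s a := by
  unfold wnorm
  exact Real.rpow_nonneg (tsum_nonneg fun k => by positivity) _

theorem aux_wnorm_sq (s : ℝ) (a : ℤ → ℂ) :
    wnorm s a ^ 2 = ∑' k : ℤ, (1 + |(k : ℝ)|) ^ (2 * s) * ‖a k‖ ^ 2 := by
  unfold wnorm
  rw [← Real.sqrt_eq_rpow, Real.sq_sqrt (tsum_nonneg fun k => by positivity)]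

theorem aux_sum0 (a : ℤ → ℂ) (h : wMem 0 a) (s : Finset ℤ) :
    ∑ k ∈ s, ‖a k‖ ^ 2 ≤ wnorm 0 a ^ 2 := by
  rw [aux_wnorm_sq]
  have := h.sum_le_tsum s (fun k _ => by positivity)
  simpa using this

theorem aux_sum1 (a : ℤ → ℂ) (h : wMem 1 a) (s : Finset ℤ) :
    ∑ k ∈ s, (1 + |(k : ℝ)|) ^ 2 * ‖a k‖ ^ 2 ≤ wnorm 1 a ^ 2 := by
  rw [aux_wnorm_sq]
  have := h.sum_le_tsum s (fun k _ => by positivity)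
  simpa using this

theorem aux_mem (a : ℤ → ℂ) (h : wMem 1 a) : wMem 0 a := by
  unfold wMem at *
  refine Summable.of_nonneg_of_le (fun k => by positivity) (fun k => ?_) h
  gcongr
  · linarith [abs_nonneg (k : ℝ)]
  · norm_num

theorem aux_carlson (a : ℤ → ℂ) (h : wMem 1 a) :
    ∑' k : ℤ, (‖a k‖₊ : ℝ≥0∞) ≤
      ENNReal.ofReal (√8 * (wnorm 0 a ^ (1 / 2 : ℝ) * wnorm 1 a ^ (1 / 2 : ℝ))) := by
  refine ENNReal.summable.tsum_le_of_sum_le fun s => ?_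
  have e : ∑ k ∈ s, (‖a k‖₊ : ℝ≥0∞) = ENNReal.ofReal (∑ k ∈ s, ‖a k‖) := by
    rw [ENNReal.ofReal_sum_of_nonneg (fun _ _ => norm_nonneg _)]
    refine Finset.sum_congr rfl fun k _ => ?_
    exact (ofReal_norm_eq_enorm (a k)).symm
  rw [e]
  apply ENNReal.ofReal_le_ofReal
  have hA := aux_wnorm_nonneg 0 a
  have hB := aux_wnorm_nonneg 1 a
  have k0 := aux_sum0 a (aux_mem a h)
  have k1 := aux_sum1 a h
  rw [← Real.sqrt_eq_rpow, ← Real.sqrt_eq_rpow, ← Real.sqrt_mul hA, ← Real.sqrt_mul (by norm_num)]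
  apply Real.le_sqrt_of_sq_le
  generalize wnorm 0 a = A at *
  generalize wnorm 1 a = B at *
  have zero : ∀ {X : ℝ}, X = 0 → (∀ k, ‖a k‖ ^ 2 ≤ X ^ 2) →
      (∑ k ∈ s, ‖a k‖) ^ 2 ≤ 8 * (A * B) := by
    intro X hX hk
    have : ∀ k, ‖a k‖ = 0 := fun k => by
      have := hk k
      rw [hX] at this
      nlinarith [norm_nonneg (a k)]
    simp only [this]
    simp
    positivity
  rcases hA.eq_or_lt with hA0 | hA0
  · exact zero hA0.symm fun k => by simpa using k0 {k}
  rcases hB.eq_or_lt with hB0 | hB0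
  · refine zero hB0.symm fun k => ?_
    have := k1 {k}
    simp only [Finset.sum_singleton] at this
    nlinarith [abs_nonneg (k : ℝ), sq_nonneg (‖a k‖), mul_nonneg (abs_nonneg (k : ℝ)) (sq_nonneg (‖a k‖)), mul_nonneg (sq_nonneg |(k : ℝ)|) (sq_nonneg (‖a k‖))]
  set l := B / A with hl
  have hl0 : 0 < l := by positivity
  have cs := Finset.sum_sq_le_sum_mul_sum_of_sq_eq_mul s
    (r := fun k => ‖a k‖)
    (f := fun k : ℤ => l / (l ^ 2 + (1 + |(k : ℝ)|) ^ 2))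
    (g := fun k : ℤ => (l ^ 2 + (1 + |(k : ℝ)|) ^ 2) / l * ‖a k‖ ^ 2)
    (fun k _ => by positivity) (fun k _ => by positivity)
    (fun k _ => by field_simp)
  have g2 : ∑ k ∈ s, (l ^ 2 + (1 + |(k : ℝ)|) ^ 2) / l * ‖a k‖ ^ 2 ≤ 2 * (A * B) := by
    have : ∑ k ∈ s, (l ^ 2 + (1 + |(k : ℝ)|) ^ 2) / l * ‖a k‖ ^ 2
        = l * ∑ k ∈ s, ‖a k‖ ^ 2 + l⁻¹ * ∑ k ∈ s, (1 + |(k : ℝ)|) ^ 2 * ‖a k‖ ^ 2 := by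
      rw [Finset.mul_sum, Finset.mul_sum, ← Finset.sum_add_distrib]
      refine Finset.sum_congr rfl fun k _ => ?_
      field_simp
    rw [this]
    calc _ ≤ l * A ^ 2 + l⁻¹ * B ^ 2 := by
          gcongr
          · exact k0 s
          · exact k1 s
      _ = 2 * (A * B) := by
          rw [hl]
          field_simp
          ring
  calc _ ≤ _ := cs
    _ ≤ 4 * (2 * (A * B)) := by
        gcongr
        exact aux_kernel_sum l hl0 s
    _ = _ := by ring

theorem aux_cs (P R : ℤ → ℂ) (hP : wMem 0 P) (hR : wMem 0 R) (m : ℤ) :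
    ∑' k : ℤ, (‖P (k - m)‖₊ : ℝ≥0∞) * (‖R k‖₊ : ℝ≥0∞) ≤
      ENNReal.ofReal (wnorm 0 P * wnorm 0 R) := by
  refine ENNReal.summable.tsum_le_of_sum_le fun s => ?_
  have e : ∑ k ∈ s, (‖P (k - m)‖₊ : ℝ≥0∞) * (‖R k‖₊ : ℝ≥0∞)
      = ENNReal.ofReal (∑ k ∈ s, ‖P (k - m)‖ * ‖R k‖) := by
    rw [ENNReal.ofReal_sum_of_nonneg (fun _ _ => by positivity)]
    refine Finset.sum_congr rfl fun k _ => ?_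
    rw [ENNReal.ofReal_mul (norm_nonneg _), ofReal_norm_eq_enorm, ofReal_norm_eq_enorm]
    rfl
  rw [e]
  apply ENNReal.ofReal_le_ofReal
  refine (Real.sum_mul_le_sqrt_mul_sqrt s _ _).trans ?_
  gcongr
  · exact aux_wnorm_nonneg 0 P
  · apply Real.sqrt_le_iff.2 ⟨aux_wnorm_nonneg 0 P, ?_⟩
    have := aux_sum0 P hP (s.map (Equiv.subRight m).toEmbedding)
    simpa using this
  · exact Real.sqrt_le_iff.2 ⟨aux_wnorm_nonneg 0 R, aux_sum0 R hR s⟩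

/-- The quadrilinear estimate
`∑_k (|M| ⋆ |N| ⋆ |P|)(k) |R_k| ≤ C ‖M‖₂^{1/2} ‖M‖_{2,1}^{1/2} ‖N‖₂^{1/2} ‖N‖_{2,1}^{1/2} ‖P‖₂ ‖R‖₂`,
where the sums on the left are taken in `ℝ≥0∞` (so the inequality also asserts finiteness). -/
theorem quadrilinear_convolution_estimate :
    ∃ C : ℝ, 0 < C ∧ ∀ M N P R : ℤ → ℂ,
      wMem 1 M → wMem 1 N → wMem 0 P → wMem 0 R →
      ∑' k : ℤ,
          (∑' j : ℤ × ℤ,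
            (‖M j.1‖₊ * ‖N j.2‖₊ * ‖P (k - j.1 - j.2)‖₊ : ℝ≥0∞)) * (‖R k‖₊ : ℝ≥0∞) ≤
        ENNReal.ofReal (C * wnorm 0 M ^ (1 / 2 : ℝ) * wnorm 1 M ^ (1 / 2 : ℝ) *
          wnorm 0 N ^ (1 / 2 : ℝ) * wnorm 1 N ^ (1 / 2 : ℝ) * wnorm 0 P * wnorm 0 R) := by
  refine ⟨8, by norm_num, fun M N P R hM hN hP hR => ?_⟩
  calc _ = ∑' j : ℤ × ℤ, (‖M j.1‖₊ * ‖N j.2‖₊ : ℝ≥0∞) *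
        ∑' k : ℤ, (‖P (k - (j.1 + j.2))‖₊ : ℝ≥0∞) * (‖R k‖₊ : ℝ≥0∞) := by
        simp_rw [← ENNReal.tsum_mul_right, ← ENNReal.tsum_mul_left]
        rw [ENNReal.tsum_comm]
        refine tsum_congr fun j => tsum_congr fun k => ?_
        rw [sub_sub, mul_assoc]
    _ ≤ ∑' j : ℤ × ℤ, (‖M j.1‖₊ * ‖N j.2‖₊ : ℝ≥0∞) *
        ENNReal.ofReal (wnorm 0 P * wnorm 0 R) := by
        refine ENNReal.tsum_le_tsum fun j => ?_
        gcongr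
        exact aux_cs P R hP hR _
    _ = ((∑' k : ℤ, (‖M k‖₊ : ℝ≥0∞)) * (∑' k : ℤ, (‖N k‖₊ : ℝ≥0∞))) *
        ENNReal.ofReal (wnorm 0 P * wnorm 0 R) := by
        rw [ENNReal.tsum_mul_right, ENNReal.tsum_prod (f := fun a b => (‖M a‖₊ * ‖N b‖₊ : ℝ≥0∞))]
        simp_rw [ENNReal.tsum_mul_left, ENNReal.tsum_mul_right]
    _ ≤ (ENNReal.ofReal (√8 * (wnorm 0 M ^ (1 / 2 : ℝ) * wnorm 1 M ^ (1 / 2 : ℝ))) *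
        ENNReal.ofReal (√8 * (wnorm 0 N ^ (1 / 2 : ℝ) * wnorm 1 N ^ (1 / 2 : ℝ)))) *
        ENNReal.ofReal (wnorm 0 P * wnorm 0 R) := by
        gcongr
        · exact aux_carlson M hM
        · exact aux_carlson N hN
    _ = _ := by
        have h0M := aux_wnorm_nonneg 0 M
        have h1M := aux_wnorm_nonneg 1 M
        have h0N := aux_wnorm_nonneg 0 N
        have h1N := aux_wnorm_nonneg 1 N
        rw [← ENNReal.ofReal_mul (by positivity), ← ENNReal.ofReal_mul (by positivity)]
        congr 1
        have h8 : √8 * √8 = (8 : ℝ) := Real.mul_self_sqrt (by norm_num)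
        generalize √8 = t at *
        rw [← h8]
        ring
end
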